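/- arXiv:1906.12197 — 5 statements merged into one kernel-verified Lean document; each statement's English description precedes it below -/
import Mathlib

section
/- Let Γ be a group and let ρ₁, ρ₂ be unitary representations of Γ on complex Hilbert spaces V₁ and V₂. Suppose T : V₁ → V₂ is a nonzero compact continuous linear operator that intertwines the representations, i.e., T ∘ ρ₁(g) = ρ₂(g) ∘ T for all g ∈ Γ. Then both ρ₁ and ρ₂ admit nonzero finite-dimensional invariant subspaces: there exist nonzero finite-dimensional subspaces W₁ ⊆ V₁ and W₂ ⊆ V₂ with ρ₁(g)W₁ = W₁ and ρ₂(g)W₂ = W₂ for all g ∈ Γ. -/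
/-! The operator `S = T* T` on `V₁` is compact, self-adjoint and nonzero, so it has a nonzero
eigenvalue `μ`, whose eigenspace `W₁` is finite-dimensional. Unitarity of `ρ₁` and `ρ₂` makes `T*`
an intertwiner, so `S` commutes with `ρ₁` and `W₁` is invariant. Then `W₂ = T(W₁)` is
finite-dimensional and invariant under `ρ₂`, and it is nonzero because `T* T = μ ≠ 0` on `W₁`. -/

/-- For a group action, stability `ρ(g)W ⊆ W` for all `g` upgrades to equality, by applying it
to `g⁻¹`. -/
lemma map_eq_of_forall_apply_mem {Γ : Type*} [Group Γ]
    {V : Type*} [NormedAddCommGroup V] [InnerProductSpace ℂ V]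
    (ρ : Γ →* (V ≃ₗᵢ[ℂ] V)) (W : Submodule ℂ V) (h : ∀ g, ∀ x ∈ W, ρ g x ∈ W) (g : Γ) :
    W.map ((ρ g).toLinearEquiv : V →ₗ[ℂ] V) = W := by
  apply le_antisymm
  · rintro _ ⟨x, hx, rfl⟩
    exact h g x hx
  · intro x hx
    refine ⟨ρ g⁻¹ x, h g⁻¹ x hx, ?_⟩
    change (ρ g * ρ g⁻¹) x = x
    rw [← map_mul, mul_inv_cancel, map_one]
    rfl

/-- The adjoint of an intertwiner of unitary representations is an intertwiner. -/
lemma adjoint_intertwines {Γ : Type*} [Group Γ]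
    {V₁ : Type*} [NormedAddCommGroup V₁] [InnerProductSpace ℂ V₁] [CompleteSpace V₁]
    {V₂ : Type*} [NormedAddCommGroup V₂] [InnerProductSpace ℂ V₂] [CompleteSpace V₂]
    (ρ₁ : Γ →* (V₁ ≃ₗᵢ[ℂ] V₁)) (ρ₂ : Γ →* (V₂ ≃ₗᵢ[ℂ] V₂)) (T : V₁ →L[ℂ] V₂)
    (hint : ∀ g : Γ, ∀ x : V₁, T (ρ₁ g x) = ρ₂ g (T x)) (g : Γ) (y : V₂) :
    T.adjoint (ρ₂ g y) = ρ₁ g (T.adjoint y) := by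
  refine ext_inner_left ℂ fun v => ?_
  obtain ⟨x, rfl⟩ := (ρ₁ g).surjective v
  rw [ContinuousLinearMap.adjoint_inner_right, hint, LinearIsometryEquiv.inner_map_map,
    LinearIsometryEquiv.inner_map_map, ContinuousLinearMap.adjoint_inner_right]

/-- If `T` is a nonzero compact intertwiner between two unitary representations `ρ₁`, `ρ₂`
of a group `Γ`, then both representations admit nonzero finite-dimensional invariant
subspaces. -/
theorem finiteDimensional_subrepresentations_of_compact_intertwiner
    {Γ : Type*} [Group Γ]
    {V₁ : Type*} [NormedAddCommGroup V₁] [InnerProductSpace ℂ V₁] [CompleteSpace V₁]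
    {V₂ : Type*} [NormedAddCommGroup V₂] [InnerProductSpace ℂ V₂] [CompleteSpace V₂]
    (ρ₁ : Γ →* (V₁ ≃ₗᵢ[ℂ] V₁)) (ρ₂ : Γ →* (V₂ ≃ₗᵢ[ℂ] V₂))
    (T : V₁ →L[ℂ] V₂) (hT₀ : T ≠ 0) (hTc : IsCompactOperator T)
    (hint : ∀ g : Γ, ∀ x : V₁, T (ρ₁ g x) = ρ₂ g (T x)) :
    (∃ W₁ : Submodule ℂ V₁, W₁ ≠ ⊥ ∧ FiniteDimensional ℂ W₁ ∧
      ∀ g : Γ, W₁.map ((ρ₁ g).toLinearEquiv : V₁ →ₗ[ℂ] V₁) = W₁) ∧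
    (∃ W₂ : Submodule ℂ V₂, W₂ ≠ ⊥ ∧ FiniteDimensional ℂ W₂ ∧
      ∀ g : Γ, W₂.map ((ρ₂ g).toLinearEquiv : V₂ →ₗ[ℂ] V₂) = W₂) := by
  set S : V₁ →L[ℂ] V₁ := T.adjoint ∘L T with hS
  have hSc : IsCompactOperator S := hTc.clm_comp T.adjoint
  have hSsymm : (S : V₁ →ₗ[ℂ] V₁).IsSymmetric := fun x y => by
    simp [hS, ContinuousLinearMap.adjoint_inner_left, ContinuousLinearMap.adjoint_inner_right]
  have hS₀ : S ≠ 0 := fun h => hT₀ <| by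
    ext x
    have hx : inner ℂ (S x) x = 0 := by simp [h]
    simpa [hS, ContinuousLinearMap.adjoint_inner_left] using hx
  obtain ⟨μ, hμ, hμ₀⟩ : ∃ μ, Module.End.HasEigenvalue (S : Module.End ℂ V₁) μ ∧ μ ≠ 0 := by
    by_contra! h
    exact hS₀ ((ContinuousLinearMap.eq_zero_of_forall_hasEigenvalue_eq_zero hSc hSsymm).1 h)
  set W := Module.End.eigenspace (S : Module.End ℂ V₁) μ with hW
  have hmem : ∀ x, x ∈ W ↔ T.adjoint (T x) = μ • x := fun x => Module.End.mem_eigenspace_iff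
  have hfin : FiniteDimensional ℂ W := ContinuousLinearMap.finite_dimensional_eigenspace hSc μ hμ₀
  have hinv : ∀ g, ∀ x ∈ W, ρ₁ g x ∈ W := fun g x hx => by
    rw [hmem] at hx ⊢
    rw [hint, adjoint_intertwines ρ₁ ρ₂ T hint, hx, map_smul]
  refine ⟨⟨W, hμ, hfin, map_eq_of_forall_apply_mem ρ₁ W hinv⟩,
    W.map (T : V₁ →ₗ[ℂ] V₂), ?_, inferInstance, map_eq_of_forall_apply_mem ρ₂ _ ?_⟩
  · obtain ⟨x, hx, hx₀⟩ := W.exists_mem_ne_zero_of_ne_bot hμ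
    refine (Submodule.ne_bot_iff _).2 ⟨T x, ⟨x, hx, rfl⟩, fun h => ?_⟩
    have hx' := (hmem x).1 hx
    rw [h, map_zero] at hx'
    exact smul_ne_zero hμ₀ hx₀ hx'.symm
  · rintro g _ ⟨x, hx, rfl⟩
    exact ⟨ρ₁ g x, hinv g x hx, hint g x⟩
end

section
/- Let G be a group, K a subgroup of G, and ρ a unitary representation of G on a complex Hilbert space H. Suppose v ∈ H is a nonzero K-fixed vector and every K-fixed vector in H is a scalar multiple of v. Then the closed linear span W of the orbit {ρ(g)v : g ∈ G} is an irreducible subrepresentation: the only closed subspaces of W invariant under ρ(g) for all g ∈ G are {0} and W itself. -/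
/-!
The orthogonal projection `P` onto an invariant closed subspace `U` commutes with `ρ`, because `Uᗮ`
is invariant as well. Hence `P v` is `K`-fixed, so `P v = c • v`. If `c ≠ 0` then `v ∈ U`, and
`U` contains the whole cyclic span. If `c = 0` then `v ∈ Uᗮ`, so the cyclic span lies in `Uᗮ`,
and `U`, being contained in it, is orthogonal to itself.
-/

theorem orthogonal_invariant_of_invariant
    {G : Type*} [Group G] {H : Type*} [NormedAddCommGroup H] [InnerProductSpace ℂ H]
    (ρ : G →* (H ≃ₗᵢ[ℂ] H)) (U : Submodule ℂ H) (hU : ∀ g : G, ∀ x ∈ U, ρ g x ∈ U)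
    (g : G) (y : H) (hy : y ∈ Uᗮ) : ρ g y ∈ Uᗮ := by
  rw [Submodule.mem_orthogonal] at hy ⊢
  intro u hu
  have h : ρ g (ρ g⁻¹ u) = u := by
    change (ρ g * ρ g⁻¹) u = u
    rw [← map_mul, mul_inv_cancel, map_one, LinearIsometryEquiv.coe_one, id]
  rw [← h, LinearIsometryEquiv.inner_map_map]
  exact hy _ (hU _ _ hu)

theorem cyclic_span_le_of_mem
    {G : Type*} [Group G] {H : Type*} [NormedAddCommGroup H] [InnerProductSpace ℂ H]
    (ρ : G →* (H ≃ₗᵢ[ℂ] H)) (U : Submodule ℂ H) (hcl : IsClosed (U : Set H))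
    (hU : ∀ g : G, ∀ x ∈ U, ρ g x ∈ U) (v : H) (hv : v ∈ U) :
    (Submodule.span ℂ (Set.range fun g : G => ρ g v)).topologicalClosure ≤ U := by
  refine Submodule.topologicalClosure_minimal _ (Submodule.span_le.2 ?_) hcl
  rintro _ ⟨g, rfl⟩
  exact hU g v hv

/-- If `v` is a nonzero `K`-fixed vector of a unitary representation `ρ` of `G`, unique up to
scalar among `K`-fixed vectors, then the closed `G`-cyclic span of `v` is an irreducible
subrepresentation. -/
theorem cyclic_span_of_unique_spherical_vector_irreducible
    {G : Type*} [Group G] {H : Type*} [NormedAddCommGroup H]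
    [InnerProductSpace ℂ H] [CompleteSpace H]
    (ρ : G →* (H ≃ₗᵢ[ℂ] H)) (K : Subgroup G) (v : H) (hv : v ≠ 0)
    (hfix : ∀ k ∈ K, ρ k v = v)
    (huniq : ∀ w : H, (∀ k ∈ K, ρ k w = w) → ∃ c : ℂ, w = c • v) :
    ∀ U : Submodule ℂ H, IsClosed (U : Set H) →
      U ≤ (Submodule.span ℂ (Set.range fun g : G => ρ g v)).topologicalClosure →
      (∀ g : G, ∀ x ∈ U, ρ g x ∈ U) →
      U = ⊥ ∨ U = (Submodule.span ℂ (Set.range fun g : G => ρ g v)).topologicalClosure := by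
  intro U hcl hle hU
  have : CompleteSpace U := hcl.completeSpace_coe
  have hU' := orthogonal_invariant_of_invariant ρ U hU
  have hPfix : ∀ k ∈ K, ρ k (U.starProjection v) = U.starProjection v := by
    intro k hk
    -- `v = ρ k (P v) + ρ k (v - P v)` is an orthogonal decomposition along `U` and `Uᗮ`.
    refine (Submodule.eq_starProjection_of_mem_orthogonal
      (hU k _ (U.starProjection_apply_mem v)) ?_).symm
    have h := hU' k _ (U.sub_starProjection_mem_orthogonal v)
    rwa [map_sub, hfix k hk] at h
  obtain ⟨c, hc⟩ := huniq _ hPfix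
  by_cases hc0 : c = 0
  · left
    have hvU : v ∈ Uᗮ := by
      have h := U.sub_starProjection_mem_orthogonal v
      rwa [hc, hc0, zero_smul, sub_zero] at h
    have hUU : U ≤ Uᗮ :=
      hle.trans (cyclic_span_le_of_mem ρ Uᗮ U.isClosed_orthogonal hU' v hvU)
    exact disjoint_self.1 (U.orthogonal_disjoint.mono_right hUU)
  · right
    have hvU : v ∈ U :=
      (U.smul_mem_iff hc0).1 (hc ▸ U.starProjection_apply_mem v)
    exact le_antisymm hle (cyclic_span_le_of_mem ρ U hcl hU v hvU)
end

section
/- Let G be a group and L a subgroup of G such that every orbit of the natural action of L on the coset space G/L, other than the singleton orbit of the base coset eL, is infinite. Let f be an element of the Hilbert space ℓ²(G/L) of square-summable complex-valued functions on G/L. If f is L-invariant, i.e., f(l·x) = f(x) for all l ∈ L and all x ∈ G/L, then f(x) = 0 for every x ≠ eL; equivalently, f is a scalar multiple of the delta function δ_{eL} supported at the base coset. -/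
/-- If all orbits of a subgroup `L` on the coset space `G ⧸ L`, other than the base coset,
are infinite, then any `L`-invariant function in `ℓ²(G ⧸ L)` vanishes away from the base
coset, i.e. it is a scalar multiple of the delta function at the base coset. -/
theorem invariant_l2_function_supported_at_base_coset
    {G : Type*} [Group G] (L : Subgroup G)
    (horb : ∀ x : G ⧸ L, x ≠ ((1 : G) : G ⧸ L) → (MulAction.orbit L x).Infinite)
    (f : lp (fun _ : G ⧸ L => ℂ) 2)
    (hinv : ∀ l : L, ∀ x : G ⧸ L, f (l • x) = f x) :
    ∀ x : G ⧸ L, x ≠ ((1 : G) : G ⧸ L) → f x = 0 := by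
  intro x hx
  by_contra hne
  have hs : Summable fun y => ‖f y‖ ^ (2 : ENNReal).toReal :=
    (lp.memℓp f).summable (by norm_num)
  have hpos : 0 < ‖f x‖ ^ (2 : ENNReal).toReal :=
    Real.rpow_pos_of_pos (norm_pos_iff.mpr hne) _
  -- A summable family takes values at least `‖f x‖ ^ 2 > 0` only finitely often,
  -- yet by invariance it equals `‖f x‖ ^ 2` on the whole infinite orbit of `x`.
  have hev := hs.tendsto_cofinite_zero.eventually (gt_mem_nhds hpos)
  refine horb x hx ((Filter.eventually_cofinite.mp hev).subset ?_)
  rintro _ ⟨l, rfl⟩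
  simp only [Set.mem_ofPred_eq, hinv, lt_irrefl, not_false_eq_true]
end

section
/- Let G be a group and L a subgroup of G such that every orbit of the natural action of L on the coset space G/L, other than the singleton orbit of the base coset eL, is infinite. Let G act unitarily on the Hilbert space ℓ²(G/L) by (π(g)f)(x) = f(g⁻¹·x). Then this representation is topologically irreducible: every closed subspace of ℓ²(G/L) that is invariant under π(g) for all g ∈ G is either {0} or all of ℓ²(G/L). -/
/-! Let `δ` be the indicator of the base coset and `p` its orthogonal projection onto the closed
invariant subspace `V`. Since `L` fixes `δ` and the projection commutes with the unitary action,
`p` is `L`-invariant, i.e. constant on `L`-orbits (`l2Translate_proj`). A square-summable function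
vanishes on every infinite orbit on which it is constant (`eq_zero_of_infinite_orbit`), so
`p = c • δ`. If `c ≠ 0` then `δ ∈ V`, hence every translate of `δ` lies in `V`; these span a dense
subspace, so `V = ⊤`. If `c = 0` then `δ ⊥ V`, so every `f ∈ V` vanishes at the base coset, and by
invariance everywhere, so `V = ⊥`. -/

open scoped ENNReal
set_option maxHeartbeats 1000000

theorem l2Translate_memℓp {G : Type*} [Group G] (L : Subgroup G) (g : G)
    (f : lp (fun _ : G ⧸ L => ℂ) 2) :
    Memℓp (fun x : G ⧸ L => f (g⁻¹ • x)) 2 := by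
  apply memℓp_gen
  have hs : Summable fun x : G ⧸ L => ‖f x‖ ^ (2 : ℝ≥0∞).toReal :=
    f.property.summable (by norm_num)
  exact (MulAction.toPerm (β := G ⧸ L) g⁻¹).summable_iff.mpr hs

/-- The unitary translation operator `π(g)` on `ℓ²(G ⧸ L)`, given by
`(π(g) f)(x) = f (g⁻¹ • x)`. -/
noncomputable def l2Translate {G : Type*} [Group G] (L : Subgroup G) (g : G)
    (f : lp (fun _ : G ⧸ L => ℂ) 2) : lp (fun _ : G ⧸ L => ℂ) 2 :=
  ⟨fun x => f (g⁻¹ • x), l2Translate_memℓp L g f⟩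

theorem l2Translate_apply {G : Type*} [Group G] (L : Subgroup G) (g : G)
    (f : lp (fun _ : G ⧸ L => ℂ) 2) (x : G ⧸ L) : l2Translate L g f x = f (g⁻¹ • x) := rfl

theorem l2Translate_sub {G : Type*} [Group G] (L : Subgroup G) (g : G)
    (u v : lp (fun _ : G ⧸ L => ℂ) 2) :
    l2Translate L g (u - v) = l2Translate L g u - l2Translate L g v := rfl

theorem l2Translate_single {G : Type*} [Group G] (L : Subgroup G) [DecidableEq (G ⧸ L)] (g : G)
    (x : G ⧸ L) (c : ℂ) :
    l2Translate L g (lp.single 2 x c) = lp.single 2 (g • x) c := by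
  ext y
  rw [l2Translate_apply, lp.single_apply, lp.single_apply]
  by_cases h : y = g • x
  · subst h
    simp
  · have h' : g⁻¹ • y ≠ x := fun e => h (inv_smul_eq_iff.mp e)
    simp [Pi.single_eq_of_ne h, Pi.single_eq_of_ne h']

theorem inner_l2Translate_right {G : Type*} [Group G] (L : Subgroup G) (g : G)
    (u v : lp (fun _ : G ⧸ L => ℂ) 2) :
    inner ℂ u (l2Translate L g v) = inner ℂ (l2Translate L g⁻¹ u) v := by
  rw [lp.inner_eq_tsum, lp.inner_eq_tsum, ← (MulAction.toPerm (β := G ⧸ L) g).tsum_eq]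
  simp [l2Translate_apply]

/-- The orthogonal projection of an `l`-fixed vector onto an invariant subspace is `l`-fixed. -/
theorem l2Translate_proj {G : Type*} [Group G] (L : Subgroup G)
    (V : Submodule ℂ (lp (fun _ : G ⧸ L => ℂ) 2)) [V.HasOrthogonalProjection]
    (hV : ∀ g : G, ∀ f ∈ V, l2Translate L g f ∈ V) (l : G)
    (d : lp (fun _ : G ⧸ L => ℂ) 2) (hd : l2Translate L l d = d) :
    l2Translate L l (V.starProjection d) = V.starProjection d := by
  refine (Submodule.eq_starProjection_of_mem_orthogonal
    (hV l _ (V.starProjection_apply_mem d)) ?_).symm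
  have h : d - l2Translate L l (V.starProjection d)
      = l2Translate L l (d - V.starProjection d) := by
    rw [l2Translate_sub, hd]
  rw [h, Submodule.mem_orthogonal]
  intro u hu
  rw [inner_l2Translate_right]
  exact (Submodule.mem_orthogonal V _).mp (V.sub_starProjection_mem_orthogonal d) _ (hV _ u hu)

theorem eq_zero_of_infinite_orbit {G : Type*} [Group G] (L : Subgroup G)
    (p : lp (fun _ : G ⧸ L => ℂ) 2) (hp : ∀ l : L, l2Translate L (l : G) p = p)
    (x : G ⧸ L) (hx : (MulAction.orbit L x).Infinite) : p x = 0 := by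
  by_contra h0
  have hs : Summable fun y : G ⧸ L => ‖p y‖ ^ (2 : ℝ≥0∞).toReal :=
    p.property.summable (by norm_num)
  have hpos : 0 < ‖p x‖ ^ (2 : ℝ≥0∞).toReal := Real.rpow_pos_of_pos (norm_pos_iff.mpr h0) _
  have hfin := hs.tendsto_cofinite_zero.eventually (gt_mem_nhds hpos)
  refine hx (Set.Finite.subset (Filter.eventually_cofinite.mp hfin) ?_)
  rintro _ ⟨l, rfl⟩
  have hl : p (l • x) = p x := by
    have := congrArg (fun f : lp (fun _ : G ⧸ L => ℂ) 2 => f (l • x)) (hp l)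
    simp only [l2Translate_apply] at this
    rw [← this]
    exact congrArg (fun y => p y) (inv_smul_smul (l : G) x)
  simp [hl]

/-- If all orbits of a subgroup `L` on `G ⧸ L`, other than the base coset, are infinite,
then the quasi-regular unitary representation of `G` on `ℓ²(G ⧸ L)` is topologically
irreducible. -/
theorem quasiRegular_representation_irreducible
    {G : Type*} [Group G] (L : Subgroup G)
    (horb : ∀ x : G ⧸ L, x ≠ ((1 : G) : G ⧸ L) → (MulAction.orbit L x).Infinite) :
    ∀ V : Submodule ℂ (lp (fun _ : G ⧸ L => ℂ) 2),
      IsClosed (V : Set (lp (fun _ : G ⧸ L => ℂ) 2)) →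
      (∀ g : G, ∀ f ∈ V, l2Translate L g f ∈ V) →
      V = ⊥ ∨ V = ⊤ := by
  classical
  intro V hc hV
  have : CompleteSpace V := hc.completeSpace_coe
  set d : lp (fun _ : G ⧸ L => ℂ) 2 := lp.single 2 ((1 : G) : G ⧸ L) 1 with hd
  have hfix : ∀ l : L, l2Translate L (l : G) d = d := by
    intro l
    rw [hd, l2Translate_single]
    congr 1
    rw [MulAction.Quotient.smul_coe, QuotientGroup.eq]
    simp
  set p := V.starProjection d with hp
  have hpV : p ∈ V := V.starProjection_apply_mem d
  have hp0 : ∀ x : G ⧸ L, x ≠ ((1 : G) : G ⧸ L) → p x = 0 := fun x hx =>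
    eq_zero_of_infinite_orbit L p (fun l => l2Translate_proj L V hV l d (hfix l)) x (horb x hx)
  have hpd : p = p ((1 : G) : G ⧸ L) • d := by
    ext x
    rw [lp.coeFn_smul, Pi.smul_apply, hd, lp.single_apply]
    by_cases hx : x = ((1 : G) : G ⧸ L)
    · subst hx
      simp
    · simp [hp0 x hx, Pi.single_eq_of_ne hx]
  by_cases hz : p ((1 : G) : G ⧸ L) = 0
  · left
    rw [hz, zero_smul] at hpd
    have hperp : d ∈ Vᗮ := by
      have := V.sub_starProjection_mem_orthogonal d
      rwa [← hp, hpd, sub_zero] at this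
    have hbase : ∀ f ∈ V, f ((1 : G) : G ⧸ L) = 0 := by
      intro f hf
      have := (Submodule.mem_orthogonal' V d).mp hperp f hf
      rw [hd, lp.inner_single_left] at this
      simpa using this
    rw [Submodule.eq_bot_iff]
    intro f hf
    ext x
    obtain ⟨g, rfl⟩ := QuotientGroup.mk_surjective x
    have := hbase _ (hV g⁻¹ f hf)
    rw [l2Translate_apply, inv_inv, MulAction.Quotient.smul_coe] at this
    simpa using this
  · right
    have hdV : d ∈ V := by
      rw [hpd] at hpV
      exact (V.smul_mem_iff hz).mp hpV
    have hsingle : ∀ (x : G ⧸ L) (c : ℂ), lp.single 2 x c ∈ V := by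
      intro x c
      obtain ⟨g, rfl⟩ := QuotientGroup.mk_surjective x
      have h := V.smul_mem c (hV g d hdV)
      rw [hd, l2Translate_single, MulAction.Quotient.smul_coe, ← lp.single_smul] at h
      simpa using h
    rw [Submodule.eq_top_iff']
    intro f
    exact hc.mem_of_tendsto (lp.hasSum_single (by norm_num) f)
      (Filter.Eventually.of_forall fun s => V.sum_mem fun x _ => hsingle x _)
end

section
/- Let H be a complex Hilbert space containing two linearly independent vectors (i.e., of dimension at least 2). Let 𝒜 be a set of bounded (continuous) linear operators on H such that any two elements of 𝒜 commute and such that 𝒜 is closed under taking adjoints (A ∈ 𝒜 implies A* ∈ 𝒜). Then there exists a closed subspace V of H with V ≠ {0} and V ≠ H such that A(V) ⊆ V for every A ∈ 𝒜. -/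
/-!
If every operator of the family is scalar, every line is invariant. Otherwise some `A` in the
family is not scalar; it is normal, because it commutes with its adjoint, so its spectrum contains
two distinct points. Continuous bump functions `f`, `g` with `f * g = 0` around these points give
nonzero operators `f(A)`, `g(A)` with `f(A) g(A) = 0`. Then `ker f(A)` is not the whole space, is
nonzero since it contains the range of `g(A)`, and is invariant under everything that commutes with
`A` and its adjoint, in particular under the family.
-/

/-- A normal element with at least two spectral points has zero divisors in its functional
calculus. -/
lemma exists_cfc_mul_eq_zero {R : Type*} [CStarAlgebra R] (a : R) [IsStarNormal a]
    (h : (spectrum ℂ a).Nontrivial) :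
    ∃ f g : ℂ → ℂ, cfc f a ≠ 0 ∧ cfc g a ≠ 0 ∧ cfc f a * cfc g a = 0 := by
  obtain ⟨x, hx, y, hy, hxy⟩ := h
  -- bumps supported on the two open half-planes cut out by the bisector of `x` and `y`
  let f : ℂ → ℂ := fun z => ((max 0 (dist z y - dist z x) : ℝ) : ℂ)
  let g : ℂ → ℂ := fun z => ((max 0 (dist z x - dist z y) : ℝ) : ℂ)
  have hf : Continuous f := by fun_prop
  have hg : Continuous g := by fun_prop
  have hd : 0 < dist x y := dist_pos.mpr hxy
  have hz : cfc (0 : ℂ → ℂ) a = 0 := cfc_zero ℂ a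
  refine ⟨f, g, fun h0 => ?_, fun h0 => ?_, ?_⟩
  · have := eqOn_of_cfc_eq_cfc (h0.trans hz.symm) hf.continuousOn continuousOn_const ‹_› hx
    simp only [f, dist_self, sub_zero, max_eq_right hd.le, Pi.zero_apply, Complex.ofReal_eq_zero]
      at this
    exact hd.ne' this
  · have := eqOn_of_cfc_eq_cfc (h0.trans hz.symm) hg.continuousOn continuousOn_const ‹_› hy
    rw [dist_comm] at hd
    simp only [g, dist_self, sub_zero, max_eq_right hd.le, Pi.zero_apply, Complex.ofReal_eq_zero]
      at this
    exact hd.ne' this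
  · rw [← cfc_mul f g a hf.continuousOn hg.continuousOn, ← hz]
    congr 1
    funext z
    simp only [f, g, Pi.zero_apply, ← Complex.ofReal_mul, Complex.ofReal_eq_zero]
    rcases le_total (dist z x) (dist z y) with h | h
    · rw [max_eq_left (sub_nonpos.mpr h), mul_zero]
    · rw [max_eq_left (sub_nonpos.mpr h), zero_mul]

/-- A commuting family of bounded operators on a complex Hilbert space of dimension at
least two, closed under taking adjoints, has a common closed invariant subspace that is
neither `{0}` nor the whole space. -/
theorem commuting_selfadjoint_family_has_proper_invariant_subspace
    {H : Type*} [NormedAddCommGroup H] [InnerProductSpace ℂ H] [CompleteSpace H]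
    (hdim : ∃ v w : H, LinearIndependent ℂ ![v, w])
    (𝒜 : Set (H →L[ℂ] H))
    (hcomm : ∀ A ∈ 𝒜, ∀ B ∈ 𝒜, A * B = B * A)
    (hadj : ∀ A ∈ 𝒜, ContinuousLinearMap.adjoint A ∈ 𝒜) :
    ∃ V : Submodule ℂ H, IsClosed (V : Set H) ∧ V ≠ ⊥ ∧ V ≠ ⊤ ∧
      ∀ A ∈ 𝒜, ∀ x ∈ V, A x ∈ V := by
  have hnormal : ∀ A ∈ 𝒜, IsStarNormal A := fun A hA => ⟨hcomm _ (hadj A hA) _ hA⟩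
  by_cases hs : ∃ A ∈ 𝒜, (spectrum ℂ A).Nontrivial
  · obtain ⟨A, hA, hsp⟩ := hs
    have := hnormal A hA
    obtain ⟨f, g, hf, hg, hfg⟩ := exists_cfc_mul_eq_zero A hsp
    refine ⟨(cfc f A).ker, (cfc f A).isClosed_ker, fun hbot => hg ?_, fun htop => hf ?_, ?_⟩
    · ext x
      have hx : cfc g A x ∈ (cfc f A).ker := by
        simpa using DFunLike.congr_fun hfg x
      rw [hbot] at hx
      simpa using hx
    · ext x
      have hx : x ∈ (cfc f A).ker := htop ▸ Submodule.mem_top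
      simpa using hx
    · intro B hB x hx
      have hc : Commute (cfc f A) B :=
        Commute.cfc (hcomm A hA B hB) (hcomm _ (hadj A hA) B hB) f
      have hx' : cfc f A x = 0 := by simpa using hx
      have h1 : cfc f A (B x) = B (cfc f A x) := DFunLike.congr_fun hc.eq x
      rw [hx', map_zero] at h1
      simpa using h1
  · push Not at hs
    obtain ⟨v, w, hvw⟩ := hdim
    refine ⟨ℂ ∙ v, Submodule.closed_of_finiteDimensional _, ?_, fun htop => ?_, ?_⟩
    · rw [Ne, Submodule.span_singleton_eq_bot]
      exact hvw.ne_zero 0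
    · have hw : w ∈ ℂ ∙ v := htop ▸ Submodule.mem_top
      obtain ⟨c, hc⟩ := Submodule.mem_span_singleton.mp hw
      have := (LinearIndependent.pair_iff.mp hvw c (-1) (by simp [hc])).2
      simp at this
    · intro A hA x hx
      have := hnormal A hA
      obtain ⟨r, hr⟩ : ∃ r : ℂ, spectrum ℂ A ⊆ {r} := by
        rcases (hs A hA).eq_empty_or_singleton with h | ⟨r, h⟩
        · exact ⟨0, by simp [h]⟩
        · exact ⟨r, h.subset⟩
      rw [CFC.eq_algebraMap_of_spectrum_subset_singleton A r hr]
      simpa [Algebra.algebraMap_eq_smul_one] using Submodule.smul_mem _ r hx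
end
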